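/- (Jump relation for the clamped-plate layer potential K₁, biharmonic part.) Let σ : ℝ → ℝ be infinitely differentiable with σ(s+L) = σ(s) for all s, and fix t ∈ ℝ. Define K₁(x, γ(s)) = G^B_{n_y n_y n_y}(x, γ(s)) + 3·G^B_{n_y τ_y τ_y}(x, γ(s)), where with r = x − γ(s): G^B_{n_y n_y n_y}(x, γ(s)) = −(3/(4π))(r·n(s))/‖r‖² + (1/(2π))(r·n(s))³/‖r‖⁴ and G^B_{n_y τ_y τ_y}(x, γ(s)) = (1/(2π))(r·n(s))(r·τ(s))²/‖r‖⁴ − (1/(4π))(r·n(s))/‖r‖². Then there is h₀ > 0 such that for 0 < |h| < h₀ the point γ(t) + h·n(t) does not lie on the curve, the function s ↦ K₁(γ(t), γ(s))·σ(s) (defined for s not congruent to t mod L) is bounded on [0, L] with Lebesgue integral I := ∫₀^L K₁(γ(t), γ(s))σ(s) ds, and lim_{h→0⁺} ∫₀^L K₁(γ(t)+h·n(t), γ(s))σ(s) ds = −(1/2)σ(t) + I, while lim_{h→0⁻} ∫₀^L K₁(γ(t)+h·n(t), γ(s))σ(s) ds = (1/2)σ(t) + I. -/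

import Mathlib

open Real Filter Topology MeasureTheory

noncomputable section

/-- Euclidean dot product on `ℝ × ℝ`. -/
def dot2 (v w : ℝ × ℝ) : ℝ := v.1 * w.1 + v.2 * w.2

/-- Unit tangent vector `τ(s) = γ′(s)`. -/
def tang (γ : ℝ → ℝ × ℝ) (s : ℝ) : ℝ × ℝ := deriv γ s

/-- Unit normal vector `n(s) = (τ₂(s), −τ₁(s))`. -/
def nor (γ : ℝ → ℝ × ℝ) (s : ℝ) : ℝ × ℝ := ((deriv γ s).2, -(deriv γ s).1)

/-- Signed curvature `κ(s) = −γ″(s)·n(s)`. -/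
def curv (γ : ℝ → ℝ × ℝ) (s : ℝ) : ℝ := -(dot2 (deriv (deriv γ) s) (nor γ s))

/-- The clamped-plate kernel
`K₁(x, γ(s)) = G^B_{n_y n_y n_y}(x, γ(s)) + 3 G^B_{n_y τ_y τ_y}(x, γ(s))`,
given by its explicit formula, with `r = x − γ(s)`. -/
def K1clamped (γ : ℝ → ℝ × ℝ) (x : ℝ × ℝ) (s : ℝ) : ℝ :=
  (-(3 / (4 * π)) * dot2 (x - γ s) (nor γ s) / dot2 (x - γ s) (x - γ s)
      + 1 / (2 * π) * (dot2 (x - γ s) (nor γ s)) ^ 3 / (dot2 (x - γ s) (x - γ s)) ^ 2)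
    + 3 *
      (1 / (2 * π) * dot2 (x - γ s) (nor γ s) * (dot2 (x - γ s) (tang γ s)) ^ 2
          / (dot2 (x - γ s) (x - γ s)) ^ 2
        - 1 / (4 * π) * dot2 (x - γ s) (nor γ s) / dot2 (x - γ s) (x - γ s))

theorem K1_eq (γ : ℝ → ℝ × ℝ) (harc : ∀ s, dot2 (deriv γ s) (deriv γ s) = 1) (x : ℝ × ℝ) (s : ℝ) :
    K1clamped γ x s = -(1 / π) *
      ((dot2 (x - γ s) (nor γ s)) ^ 3 / (dot2 (x - γ s) (x - γ s)) ^ 2) := by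
  have hρ : dot2 (x - γ s) (x - γ s)
      = dot2 (x - γ s) (nor γ s) ^ 2 + dot2 (x - γ s) (tang γ s) ^ 2 := by
    have h1 := harc s
    simp only [dot2, nor, tang] at *
    linear_combination (-((x - γ s).1^2 + (x - γ s).2^2)) * h1
  unfold K1clamped
  generalize dot2 (x - γ s) (x - γ s) = ρ at *
  generalize dot2 (x - γ s) (nor γ s) = a at *
  generalize dot2 (x - γ s) (tang γ s) = b at *
  by_cases h0 : ρ = 0
  · simp [h0]
  · have := Real.pi_ne_zero
    field_simp
    rw [hρ]
    ring

theorem alg1 (a h ρ V W A C₁ C₂ m D : ℝ) (hW : 0 < W) (hA : 1 ≤ A) (hm : 0 < m) (hC₁ : 0 ≤ C₁)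
    (hC₂ : 0 ≤ C₂)
    (ha : |a| ≤ A * W) (hh : |h| ≤ W) (hah : |a - h| ≤ C₁ * W ^ 2)
    (hρ : m * W ^ 2 ≤ ρ) (hV : W ^ 2 / 2 ≤ V) (hV2 : V ≤ W ^ 2) (hρV : |ρ - V| ≤ C₂ * W ^ 3)
    (hρD : ρ ≤ D * W ^ 2) :
    |a ^ 3 / ρ ^ 2 - h ^ 3 / V ^ 2| ≤ 3 * C₁ * A ^ 2 / m ^ 2 + C₂ * (1 + D) / (m ^ 2 / 4) := by
  have hW2 : 0 < W ^ 2 := by positivity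
  have hρ0 : 0 < ρ := lt_of_lt_of_le (by positivity) hρ
  have hV0 : 0 < V := lt_of_lt_of_le (by positivity) hV
  have hD : 0 ≤ D := by
    by_contra hneg
    push Not at hneg
    nlinarith
  have e : a ^ 3 / ρ ^ 2 - h ^ 3 / V ^ 2
      = (a - h) * (a ^ 2 + a * h + h ^ 2) / ρ ^ 2
        + h ^ 3 * ((V - ρ) * (V + ρ)) / (ρ ^ 2 * V ^ 2) := by
    field_simp
    ring
  have hρ4 : m ^ 2 * W ^ 4 ≤ ρ ^ 2 := by
    calc m ^ 2 * W ^ 4 = (m * W ^ 2) ^ 2 := by ring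
      _ ≤ ρ ^ 2 := by gcongr
  have hV4 : W ^ 4 / 4 ≤ V ^ 2 := by
    calc W ^ 4 / 4 = (W ^ 2 / 2) ^ 2 := by ring
      _ ≤ V ^ 2 := by gcongr
  have hhA : |h| ≤ A * W := hh.trans (by nlinarith)
  have hq : |a ^ 2 + a * h + h ^ 2| ≤ 3 * A ^ 2 * W ^ 2 := by
    calc |a ^ 2 + a * h + h ^ 2| ≤ |a| ^ 2 + |a| * |h| + |h| ^ 2 := by
          refine (abs_add_three _ _ _).trans ?_
          rw [abs_pow, abs_pow, abs_mul]
      _ ≤ (A * W) ^ 2 + (A * W) * (A * W) + (A * W) ^ 2 := by gcongr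
      _ = _ := by ring
  rw [e]
  refine (abs_add_le _ _).trans (add_le_add ?_ ?_)
  · rw [abs_div, abs_mul, abs_of_pos (by positivity : 0 < ρ ^ 2), div_le_div_iff₀ (by positivity) (by positivity)]
    calc |a - h| * |a ^ 2 + a * h + h ^ 2| * m ^ 2
        ≤ (C₁ * W ^ 2) * (3 * A ^ 2 * W ^ 2) * m ^ 2 := by gcongr
      _ = 3 * C₁ * A ^ 2 * (m ^ 2 * W ^ 4) := by ring
      _ ≤ 3 * C₁ * A ^ 2 * ρ ^ 2 := by gcongr
  · rw [abs_div, abs_mul, abs_mul, abs_pow, abs_of_pos (by positivity : 0 < ρ ^ 2 * V ^ 2),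
      div_le_div_iff₀ (by positivity) (by positivity), abs_sub_comm V ρ,
      abs_of_pos (by positivity : 0 < V + ρ)]
    calc |h| ^ 3 * (|ρ - V| * (V + ρ)) * (m ^ 2 / 4)
        ≤ W ^ 3 * ((C₂ * W ^ 3) * (W ^ 2 + D * W ^ 2)) * (m ^ 2 / 4) := by gcongr
      _ = C₂ * (1 + D) * ((m ^ 2 * W ^ 4) * (W ^ 4 / 4)) := by ring
      _ ≤ C₂ * (1 + D) * (ρ ^ 2 * V ^ 2) := by gcongr

/-- Elementary estimates in coordinates. -/
theorem alg2 (p₀ q₀ p q X Y u h B c R : ℝ) (hB : 1 ≤ B) (hc : 0 < c) (hc1 : c ≤ 1)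
    (h1 : p ^ 2 + q ^ 2 = 1) (h0 : p₀ ^ 2 + q₀ ^ 2 = 1)
    (hX : |X - p₀ * u| ≤ B * u ^ 2) (hY : |Y - q₀ * u| ≤ B * u ^ 2)
    (hp : |p - p₀| ≤ B * |u|) (hq : |q - q₀| ≤ B * |u|)
    (hcu : c * u ^ 2 ≤ X ^ 2 + Y ^ 2) (hu : |u| ≤ R) (hh : |h| ≤ c / (8 * B)) :
    c / 2 * (h ^ 2 + u ^ 2) ≤ (-X + h * q₀) ^ 2 + (-Y - h * p₀) ^ 2 ∧
    |((-X + h * q₀) * q - (-Y - h * p₀) * p) - h| ≤ (4 * B + B ^ 2) * u ^ 2 ∧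
    |((-X + h * q₀) ^ 2 + (-Y - h * p₀) ^ 2) - (h ^ 2 + u ^ 2)|
      ≤ (4 * B + 2 * B ^ 2 * R) * (|h| + |u|) ^ 3 := by
  have hB0 : 0 < B := by linarith
  have hp₀ : |p₀| ≤ 1 := abs_le_one_iff_mul_self_le_one.2 (by nlinarith)
  have hq₀ : |q₀| ≤ 1 := abs_le_one_iff_mul_self_le_one.2 (by nlinarith)
  have hp1 : |p| ≤ 1 := abs_le_one_iff_mul_self_le_one.2 (by nlinarith)
  have hq1 : |q| ≤ 1 := abs_le_one_iff_mul_self_le_one.2 (by nlinarith)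
  have hu2 : |u| ^ 2 = u ^ 2 := sq_abs u
  have hh1 : |h| ≤ 1 := hh.trans (by rw [div_le_one (by positivity)]; linarith)
  obtain ⟨e₁, rfl⟩ : ∃ e, X = p₀ * u + e := ⟨X - p₀ * u, by ring⟩
  obtain ⟨e₂, rfl⟩ : ∃ e, Y = q₀ * u + e := ⟨Y - q₀ * u, by ring⟩
  obtain ⟨f₁, rfl⟩ : ∃ e, p = p₀ + e := ⟨p - p₀, by ring⟩
  obtain ⟨f₂, rfl⟩ : ∃ e, q = q₀ + e := ⟨q - q₀, by ring⟩
  simp only [add_sub_cancel_left] at hX hY hp hq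
  have hcross : |e₁ * q₀ - e₂ * p₀| ≤ 2 * B * u ^ 2 := by
    calc |e₁ * q₀ - e₂ * p₀| ≤ |e₁| * |q₀| + |e₂| * |p₀| := by
          rw [← abs_mul, ← abs_mul]; exact abs_sub _ _
      _ ≤ B * u ^ 2 * 1 + B * u ^ 2 * 1 := by gcongr
      _ = _ := by ring
  have hR : 0 ≤ R := (abs_nonneg u).trans hu
  refine ⟨?_, ?_, ?_⟩
  · have h2 : |h * (e₁ * q₀ - e₂ * p₀)| ≤ c / 4 * u ^ 2 := by
      rw [abs_mul]
      calc |h| * |e₁ * q₀ - e₂ * p₀| ≤ c / (8 * B) * (2 * B * u ^ 2) := by gcongr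
        _ = _ := by field_simp; ring
    have h3 := (abs_le.1 h2).2
    have : (-(p₀ * u + e₁) + h * q₀) ^ 2 + (-(q₀ * u + e₂) - h * p₀) ^ 2
      = ((p₀ * u + e₁) ^ 2 + (q₀ * u + e₂) ^ 2) + h ^ 2 - 2 * (h * (e₁ * q₀ - e₂ * p₀)) := by
      linear_combination h ^ 2 * h0
    rw [this]
    nlinarith [sq_nonneg h]
  · have e : ((-(p₀ * u + e₁) + h * q₀) * (q₀ + f₂) - (-(q₀ * u + e₂) - h * p₀) * (p₀ + f₁)) - h
      = -(e₁ * (q₀ + f₂)) + e₂ * (p₀ + f₁) + (-(u * (p₀ * f₂)) + u * (q₀ * f₁))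
          - h * ((f₁ ^ 2 + f₂ ^ 2) / 2) := by
      linear_combination (h / 2) * h1 + (h / 2) * h0
    rw [e]
    have t1 : |e₁ * (q₀ + f₂)| ≤ B * u ^ 2 := by
      rw [abs_mul]
      calc _ ≤ B * u ^ 2 * 1 := by gcongr
        _ = _ := by ring
    have t2 : |e₂ * (p₀ + f₁)| ≤ B * u ^ 2 := by
      rw [abs_mul]
      calc _ ≤ B * u ^ 2 * 1 := by gcongr
        _ = _ := by ring
    have t3 : |u * (p₀ * f₂)| ≤ B * u ^ 2 := by
      rw [abs_mul, abs_mul]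
      calc _ ≤ |u| * (1 * (B * |u|)) := by gcongr
        _ = _ := by rw [← hu2]; ring
    have t4 : |u * (q₀ * f₁)| ≤ B * u ^ 2 := by
      rw [abs_mul, abs_mul]
      calc _ ≤ |u| * (1 * (B * |u|)) := by gcongr
        _ = _ := by rw [← hu2]; ring
    have t5 : |h * ((f₁ ^ 2 + f₂ ^ 2) / 2)| ≤ B ^ 2 * u ^ 2 := by
      rw [abs_mul, abs_of_nonneg (by positivity : 0 ≤ (f₁ ^ 2 + f₂ ^ 2) / 2), ← sq_abs f₁, ← sq_abs f₂]
      calc _ ≤ 1 * (((B * |u|) ^ 2 + (B * |u|) ^ 2) / 2) := by gcongr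
        _ = _ := by rw [← hu2]; ring
    rw [abs_le] at *
    constructor <;> linarith
  · have e : ((-(p₀ * u + e₁) + h * q₀) ^ 2 + (-(q₀ * u + e₂) - h * p₀) ^ 2) - (h ^ 2 + u ^ 2)
      = 2 * (u * (p₀ * e₁)) + 2 * (u * (q₀ * e₂)) + e₁ ^ 2 + e₂ ^ 2
        - 2 * (h * (e₁ * q₀ - e₂ * p₀)) := by
      linear_combination (h ^ 2 + u ^ 2) * h0
    rw [e]
    have t1 : |u * (p₀ * e₁)| ≤ B * |u| ^ 3 := by
      rw [abs_mul, abs_mul]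
      calc _ ≤ |u| * (1 * (B * u ^ 2)) := by gcongr
        _ = _ := by rw [← hu2]; ring
    have t2 : |u * (q₀ * e₂)| ≤ B * |u| ^ 3 := by
      rw [abs_mul, abs_mul]
      calc _ ≤ |u| * (1 * (B * u ^ 2)) := by gcongr
        _ = _ := by rw [← hu2]; ring
    have t3 : ∀ x : ℝ, |x| ≤ B * u ^ 2 → x ^ 2 ≤ B ^ 2 * R * |u| ^ 3 := by
      intro x hx
      rw [← sq_abs x]
      calc _ ≤ (B * u ^ 2) ^ 2 := by gcongr
        _ = B ^ 2 * |u| * |u| ^ 3 := by rw [← hu2]; ring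
        _ ≤ _ := by gcongr
    have t4 : |h * (e₁ * q₀ - e₂ * p₀)| ≤ 2 * B * (|h| * |u| ^ 2) := by
      rw [abs_mul]
      calc _ ≤ |h| * (2 * B * u ^ 2) := by gcongr
        _ = _ := by rw [← hu2]; ring
    have t5 := t3 e₁ hX
    have t6 := t3 e₂ hY
    have t7 : |u| ^ 3 + |h| * |u| ^ 2 ≤ (|h| + |u|) ^ 3 := by
      have := abs_nonneg h
      have := abs_nonneg u
      have k1 : 0 ≤ |h| ^ 3 + 3 * |h| ^ 2 * |u| + 2 * (|h| * |u| ^ 2) := by positivity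
      linarith [show (|h| + |u|) ^ 3 = |u| ^ 3 + |h| * |u| ^ 2 + (|h| ^ 3 + 3 * |h| ^ 2 * |u| + 2 * (|h| * |u| ^ 2)) by ring]
    have t8 : (4 * B + 2 * B ^ 2 * R) * (|u| ^ 3 + |h| * |u| ^ 2)
        ≤ (4 * B + 2 * B ^ 2 * R) * (|h| + |u|) ^ 3 := by gcongr
    have t9 : 0 ≤ 2 * B ^ 2 * R * (|h| * |u| ^ 2) := by positivity
    have := sq_nonneg e₁
    have := sq_nonneg e₂
    rw [abs_le] at *
    have := abs_nonneg u
    have : 0 ≤ B ^ 2 * R * |u| ^ 3 := by positivity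
    have t10 : (4 * B + 2 * B ^ 2 * R) * (|u| ^ 3 + |h| * |u| ^ 2) = 4 * (B * |u| ^ 3)
      + 2 * (B ^ 2 * R * |u| ^ 3) + 2 * (2 * B * (|h| * |u| ^ 2)) + 2 * B ^ 2 * R * (|h| * |u| ^ 2) := by
      ring
    constructor <;> linarith

theorem alg3 (p₀ q₀ p q X Y u h B c R : ℝ) (hB : 1 ≤ B) (hc : 0 < c) (hc1 : c ≤ 1)
    (h1 : p ^ 2 + q ^ 2 = 1) (h0 : p₀ ^ 2 + q₀ ^ 2 = 1)
    (hX : |X - p₀ * u| ≤ B * u ^ 2) (hY : |Y - q₀ * u| ≤ B * u ^ 2)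
    (hp : |p - p₀| ≤ B * |u|) (hq : |q - q₀| ≤ B * |u|)
    (hcu : c * u ^ 2 ≤ X ^ 2 + Y ^ 2) (hu : |u| ≤ R) (hh : |h| ≤ c / (8 * B)) :
    |((-X + h * q₀) * q - (-Y - h * p₀) * p) ^ 3 / ((-X + h * q₀) ^ 2 + (-Y - h * p₀) ^ 2) ^ 2
      - h ^ 3 / (h ^ 2 + u ^ 2) ^ 2| ≤
     3 * (4 * B + B ^ 2) * (1 + (4 * B + B ^ 2) * R) ^ 2 / (c / 4) ^ 2
      + (4 * B + 2 * B ^ 2 * R) * (1 + (1 + (4 * B + 2 * B ^ 2 * R) * (1 + R))) / ((c / 4) ^ 2 / 4) := by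
  obtain ⟨k1, k2, k3⟩ := alg2 p₀ q₀ p q X Y u h B c R hB hc hc1 h1 h0 hX hY hp hq hcu hu hh
  have hB0 : 0 < B := by linarith
  have hR : 0 ≤ R := (abs_nonneg u).trans hu
  have hh1 : |h| ≤ 1 := hh.trans (by rw [div_le_one (by positivity)]; linarith)
  have hu2 : |u| ^ 2 = u ^ 2 := sq_abs u
  have hh2 : |h| ^ 2 = h ^ 2 := sq_abs h
  have hn := abs_nonneg u
  have hn' := abs_nonneg h
  generalize ((-X + h * q₀) * q - (-Y - h * p₀) * p) = a at *
  generalize ((-X + h * q₀) ^ 2 + (-Y - h * p₀) ^ 2) = ρ at *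
  have hV2 : h ^ 2 + u ^ 2 ≤ (|h| + |u|) ^ 2 := by
    rw [← hu2, ← hh2]; nlinarith [mul_nonneg hn hn']
  have hV1 : (|h| + |u|) ^ 2 / 2 ≤ h ^ 2 + u ^ 2 := by
    rw [← hu2, ← hh2]; nlinarith [sq_nonneg (|h| - |u|)]
  rcases (add_nonneg hn' hn).eq_or_lt with hW | hW
  · have a1 : h = 0 := abs_eq_zero.1 (by linarith)
    have a2 : u = 0 := abs_eq_zero.1 (by linarith)
    subst a1 a2
    have : a = 0 := by simpa using k2
    subst this
    simp
    positivity
  have hC : 0 ≤ 4 * B + B ^ 2 := by positivity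
  apply alg1 a h ρ (h ^ 2 + u ^ 2) (|h| + |u|) _ _ _ _ _ hW _ (by positivity) (by positivity) (by positivity)
  · calc |a| = |(a - h) + h| := by ring_nf
      _ ≤ |a - h| + |h| := abs_add_le _ _
      _ ≤ (4 * B + B ^ 2) * u ^ 2 + |h| := by gcongr
      _ = (4 * B + B ^ 2) * (|u| * |u|) + |h| := by rw [← hu2]; ring
      _ ≤ (4 * B + B ^ 2) * (R * (|h| + |u|)) + (|h| + |u|) := by
        gcongr <;> linarith
      _ = _ := by ring
  · linarith
  · refine k2.trans ?_
    have : u ^ 2 ≤ (|h| + |u|) ^ 2 := le_trans (by nlinarith [sq_nonneg h]) hV2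
    gcongr
  · refine le_trans ?_ k1
    calc c / 4 * (|h| + |u|) ^ 2 = c / 2 * ((|h| + |u|) ^ 2 / 2) := by ring
      _ ≤ _ := by gcongr
  · exact hV1
  · exact hV2
  · exact k3
  · have := (abs_le.1 k3).2
    have k4 : (4 * B + 2 * B ^ 2 * R) * (|h| + |u|) ^ 3 ≤ (4 * B + 2 * B ^ 2 * R) * ((1 + R) * (|h| + |u|) ^ 2) := by
      gcongr
      rw [pow_succ' _ 2]
      gcongr
    have k5 : (1 + (4 * B + 2 * B ^ 2 * R) * (1 + R)) * (|h| + |u|) ^ 2 = (|h| + |u|) ^ 2 +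
      (4 * B + 2 * B ^ 2 * R) * ((1 + R) * (|h| + |u|) ^ 2) := by ring
    linarith
  · have : 0 ≤ (4 * B + B ^ 2) * R := by positivity
    linarith

theorem inj_near (L : ℝ) (hL : 0 < L) (γ : ℝ → ℝ × ℝ) (hper : ∀ s, γ (s + L) = γ s)
    (hinj : Set.InjOn γ (Set.Ico 0 L)) (t s : ℝ) (hs : |s - t| ≤ L / 2) (h : γ s = γ t) : s = t := by
  have hp : Function.Periodic γ L := hper
  have hm : ∀ x, γ (toIcoMod hL 0 x) = γ x := by
    intro x
    rw [toIcoMod]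
    exact hp.sub_zsmul_eq _
  have hI : ∀ x, toIcoMod hL 0 x ∈ Set.Ico 0 L := by
    intro x
    simpa using toIcoMod_mem_Ico hL 0 x
  have e := hinj (hI s) (hI t) (by rw [hm, hm, h])
  rw [toIcoMod, toIcoMod] at e
  simp only [zsmul_eq_mul] at e
  set k := toIcoDiv hL 0 s
  set l := toIcoDiv hL 0 t
  have e2 : s - t = ((k - l : ℤ) : ℝ) * L := by push_cast; linarith
  rw [e2, abs_mul, abs_of_pos hL] at hs
  have h3 : |((k - l : ℤ) : ℝ)| < 1 := by
    by_contra hh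
    push Not at hh
    nlinarith
  have h4 : |k - l| < 1 := by exact_mod_cast h3
  have h5 : k - l = 0 := Int.abs_lt_one_iff.1 h4
  rw [h5] at e2
  simp at e2
  linarith

theorem exists_B (L : ℝ) (γ : ℝ → ℝ × ℝ) (hγ : ContDiff ℝ (⊤ : ℕ∞) γ) (t : ℝ) :
    ∃ B : ℝ, 1 ≤ B ∧ ∀ s, |s - t| ≤ L / 2 →
      ‖deriv γ s - deriv γ t‖ ≤ B * |s - t| ∧
      ‖γ s - γ t - (s - t) • deriv γ t‖ ≤ B * (s - t) ^ 2 := by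
  have hd1 : ContDiff ℝ (⊤ : ℕ∞) (deriv γ) := by
    exact (contDiff_infty_iff_deriv.1 hγ).2
  have hd2 : ContDiff ℝ (⊤ : ℕ∞) (deriv (deriv γ)) := (contDiff_infty_iff_deriv.1 hd1).2
  obtain ⟨C, hC⟩ := (isCompact_closedBall t (L / 2)).exists_bound_of_continuousOn
    hd2.continuous.continuousOn
  have hdiff : Differentiable ℝ γ := hγ.differentiable (by simp)
  have hdiff1 : Differentiable ℝ (deriv γ) := hd1.differentiable (by simp)
  have key1 : ∀ s, |s - t| ≤ L / 2 → ‖deriv γ s - deriv γ t‖ ≤ max C 1 * |s - t| := by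
    intro s hs
    have := Convex.norm_image_sub_le_of_norm_deriv_le (f := deriv γ) (C := max C 1)
      (s := Metric.closedBall t (L / 2)) (x := t) (y := s) (fun x _ => hdiff1 x)
      (fun x hx => (hC x hx).trans (le_max_left _ _)) (convex_closedBall _ _)
      (Metric.mem_closedBall_self ((abs_nonneg _).trans hs))
      (by rwa [Metric.mem_closedBall, Real.dist_eq])
    simpa using this
  refine ⟨max C 1, le_max_right _ _, fun s hs => ⟨key1 s hs, ?_⟩⟩
  have hder : ∀ x, HasDerivAt (fun x => γ x - x • deriv γ t) (deriv γ x - (1 : ℝ) • deriv γ t) x :=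
    fun x => (hdiff x).hasDerivAt.sub ((hasDerivAt_id x).smul_const _)
  have := Convex.norm_image_sub_le_of_norm_hasDerivWithin_le
      (f := fun x => γ x - x • deriv γ t) (C := max C 1 * |s - t|)
      (s := Metric.closedBall t |s - t|) (x := t) (y := s) (fun x _ => (hder x).hasDerivWithinAt)
      (by
        intro x hx
        rw [Metric.mem_closedBall, Real.dist_eq] at hx
        rw [one_smul]
        refine (key1 x (hx.trans hs)).trans ?_
        gcongr)
      (convex_closedBall _ _) (Metric.mem_closedBall_self (abs_nonneg _))
      (by rw [Metric.mem_closedBall, Real.dist_eq])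
  calc _ = ‖γ s - s • deriv γ t - (γ t - t • deriv γ t)‖ := by
        congr 1; rw [sub_smul]; abel
    _ ≤ _ := this
    _ = max C 1 * |s - t| ^ 2 := by rw [Real.norm_eq_abs]; ring
    _ = _ := by rw [sq_abs]

theorem exists_c (L : ℝ) (hL : 0 < L) (γ : ℝ → ℝ × ℝ) (hγ : ContDiff ℝ (⊤ : ℕ∞) γ)
    (hper : ∀ s, γ (s + L) = γ s)
    (hinj : Set.InjOn γ (Set.Ico 0 L))
    (harc : ∀ s, dot2 (deriv γ s) (deriv γ s) = 1) (t : ℝ) :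
    ∃ c : ℝ, 0 < c ∧ c ≤ 1 ∧ ∀ s, |s - t| ≤ L / 2 →
      c * (s - t) ^ 2 ≤ dot2 (γ s - γ t) (γ s - γ t) := by
  have hdiff : Differentiable ℝ γ := hγ.differentiable (by simp)
  have hcont : Continuous (dslope γ t) := by
    rw [← continuousOn_univ, continuousOn_dslope Filter.univ_mem]
    exact ⟨hγ.continuous.continuousOn, hdiff t⟩
  have hcf : Continuous (fun s => dot2 (dslope γ t s) (dslope γ t s)) := by
    unfold dot2; fun_prop
  obtain ⟨s₀, hs₀, hmin⟩ := (isCompact_closedBall t (L / 2)).exists_isMinOn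
    ⟨t, Metric.mem_closedBall_self (by positivity)⟩ hcf.continuousOn
  have hpos : 0 < dot2 (dslope γ t s₀) (dslope γ t s₀) := by
    rcases eq_or_ne s₀ t with h | h
    · rw [h, dslope_same, harc]; exact one_pos
    · rw [dslope_of_ne _ h, slope_def_module]
      have hne : γ s₀ - γ t ≠ 0 := by
        intro h0
        rw [Metric.mem_closedBall, Real.dist_eq] at hs₀
        exact h (inj_near L hL γ hper hinj t s₀ hs₀ (sub_eq_zero.1 h0))
      have hne2 : (s₀ - t)⁻¹ ≠ 0 := inv_ne_zero (sub_ne_zero.2 h)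
      have hv : (s₀ - t)⁻¹ • (γ s₀ - γ t) ≠ 0 := smul_ne_zero hne2 hne
      generalize (s₀ - t)⁻¹ • (γ s₀ - γ t) = v at hv
      unfold dot2
      by_contra hc
      apply hv
      have h1 : v.1 = 0 := by nlinarith [mul_self_nonneg v.1, mul_self_nonneg v.2]
      have h2 : v.2 = 0 := by nlinarith [mul_self_nonneg v.1, mul_self_nonneg v.2]
      exact Prod.ext h1 h2
  refine ⟨min (dot2 (dslope γ t s₀) (dslope γ t s₀)) 1, lt_min hpos one_pos, min_le_right _ _, ?_⟩
  intro s hs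
  have hm := hmin (show s ∈ Metric.closedBall t (L / 2) by rwa [Metric.mem_closedBall, Real.dist_eq])
  simp only [Set.mem_ofPred_eq] at hm
  have e : dot2 (γ s - γ t) (γ s - γ t) = dot2 (dslope γ t s) (dslope γ t s) * (s - t) ^ 2 := by
    rw [← sub_smul_dslope γ t s]
    simp only [dot2, Prod.smul_fst, Prod.smul_snd, smul_eq_mul]
    ring
  rw [e]
  gcongr
  exact (min_le_left _ _).trans hm

/-- Reduced kernel. -/
def kk (γ : ℝ → ℝ × ℝ) (x : ℝ × ℝ) (s : ℝ) : ℝ :=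
  (dot2 (x - γ s) (nor γ s)) ^ 3 / (dot2 (x - γ s) (x - γ s)) ^ 2

theorem bounds (L : ℝ) (hL : 0 < L) (γ : ℝ → ℝ × ℝ) (hγ : ContDiff ℝ (⊤ : ℕ∞) γ)
    (hper : ∀ s, γ (s + L) = γ s)
    (hinj : Set.InjOn γ (Set.Ico 0 L))
    (harc : ∀ s, dot2 (deriv γ s) (deriv γ s) = 1) (t : ℝ) :
    ∃ h₀ M m : ℝ, 0 < h₀ ∧ 0 < m ∧ ∀ h, |h| ≤ h₀ → ∀ s, |s - t| ≤ L / 2 →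
      m * (h ^ 2 + (s - t) ^ 2) ≤
        dot2 (γ t + h • nor γ t - γ s) (γ t + h • nor γ t - γ s) ∧
      |kk γ (γ t + h • nor γ t) s - h ^ 3 / (h ^ 2 + (s - t) ^ 2) ^ 2| ≤ M := by
  obtain ⟨B, hB, hBs⟩ := exists_B L γ hγ t
  obtain ⟨c, hc, hc1, hcs⟩ := exists_c L hL γ hγ hper hinj harc t
  refine ⟨c / (8 * B), 3 * (4 * B + B ^ 2) * (1 + (4 * B + B ^ 2) * (L / 2)) ^ 2 / (c / 4) ^ 2
      + (4 * B + 2 * B ^ 2 * (L / 2)) * (1 + (1 + (4 * B + 2 * B ^ 2 * (L / 2)) * (1 + (L / 2)))) /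
        ((c / 4) ^ 2 / 4), c / 2, by positivity, by positivity, ?_⟩
  intro h hh s hs
  obtain ⟨b1, b2⟩ := hBs s hs
  have hcu := hcs s hs
  have x1 := (norm_fst_le _).trans b1
  have x2 := (norm_snd_le _).trans b1
  have x3 := (norm_fst_le _).trans b2
  have x4 := (norm_snd_le _).trans b2
  have a1 := harc s
  have a0 := harc t
  simp only [Prod.fst_sub, Prod.snd_sub, Prod.smul_fst, Prod.smul_snd, smul_eq_mul,
    Real.norm_eq_abs, dot2] at x1 x2 x3 x4 a1 a0 hcu
  rw [mul_comm (s - t)] at x3 x4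
  rw [← sq, ← sq] at a1 a0 hcu
  have r1 := (alg2 _ _ _ _ _ _ _ h B c (L / 2) hB hc hc1 a1 a0 x3 x4 x1 x2 hcu hs hh).1
  have r2 := alg3 _ _ _ _ _ _ _ h B c (L / 2) hB hc hc1 a1 a0 x3 x4 x1 x2 hcu hs hh
  constructor
  · refine r1.trans (le_of_eq ?_)
    simp only [dot2, nor, Prod.fst_sub, Prod.snd_sub, Prod.fst_add, Prod.snd_add, Prod.smul_fst,
      Prod.smul_snd, smul_eq_mul]
    ring
  · refine le_trans (le_of_eq ?_) r2
    unfold kk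
    congr 2
    simp only [dot2, nor, Prod.fst_sub, Prod.snd_sub, Prod.fst_add, Prod.snd_add, Prod.smul_fst,
      Prod.smul_snd, smul_eq_mul]
    congr 1 <;> ring

theorem model_integral (R t h : ℝ) (hh : h ≠ 0) :
    ∫ s in (t - R)..(t + R), h ^ 3 / (h ^ 2 + (s - t) ^ 2) ^ 2
      = h * R / (h ^ 2 + R ^ 2) + arctan (R * h⁻¹) := by
  have hp : ∀ u : ℝ, h ^ 2 + u ^ 2 ≠ 0 := fun u => by positivity
  have hder : ∀ s, HasDerivAt
      (fun s => (h * (s - t) / (h ^ 2 + (s - t) ^ 2) + arctan ((s - t) * h⁻¹)) / 2)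
      (h ^ 3 / (h ^ 2 + (s - t) ^ 2) ^ 2) s := by
    intro s
    have d0 : HasDerivAt (fun s => s - t) 1 s := (hasDerivAt_id s).sub_const t
    have d1 := (d0.const_mul h).div ((d0.pow 2).const_add (h ^ 2)) (hp (s - t))
    have d2 := (d0.mul_const h⁻¹).arctan
    refine ((d1.add d2).div_const 2).congr_deriv ?_
    have := hp (s - t)
    have h3 : 1 + ((s - t) * h⁻¹) ^ 2 = (h ^ 2 + (s - t) ^ 2) / h ^ 2 := by field_simp
    simp only [Pi.pow_apply] at *
    rw [h3]
    field_simp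
    push_cast
    ring
  rw [intervalIntegral.integral_eq_sub_of_hasDerivAt (fun s _ => hder s)]
  · have e1 : t + R - t = R := by ring
    have e2 : t - R - t = -R := by ring
    rw [e1, e2, neg_mul, arctan_neg]
    ring
  · apply Continuous.intervalIntegrable
    apply Continuous.div (by fun_prop) (by fun_prop)
    intro s
    exact pow_ne_zero _ (hp _)

theorem exists_S (L : ℝ) (hL : 0 < L) (σ : ℝ → ℝ) (hσ : ContDiff ℝ (⊤ : ℕ∞) σ) (t : ℝ) :
    ∃ S : ℝ, 0 ≤ S ∧ ∀ s, |s - t| ≤ L / 2 → |σ s| ≤ S ∧ |σ s - σ t| ≤ S * |s - t| := by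
  have hd1 : ContDiff ℝ (⊤ : ℕ∞) (deriv σ) := (contDiff_infty_iff_deriv.1 hσ).2
  obtain ⟨C, hC⟩ := (isCompact_closedBall t (L / 2)).exists_bound_of_continuousOn
    hd1.continuous.continuousOn
  obtain ⟨D, hD⟩ := (isCompact_closedBall t (L / 2)).exists_bound_of_continuousOn
    hσ.continuous.continuousOn
  have hdiff : Differentiable ℝ σ := hσ.differentiable (by simp)
  have htm : t ∈ Metric.closedBall t (L / 2) := Metric.mem_closedBall_self (by positivity)
  refine ⟨max C D, (norm_nonneg _).trans ((hC t htm).trans (le_max_left _ _)), fun s hs => ?_⟩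
  have hsm : s ∈ Metric.closedBall t (L / 2) := by rwa [Metric.mem_closedBall, Real.dist_eq]
  refine ⟨(hD s hsm).trans (le_max_right _ _), ?_⟩
  exact Convex.norm_image_sub_le_of_norm_deriv_le (f := σ) (C := max C D)
      (fun x _ => hdiff x)
      (fun x hx => (hC x hx).trans (le_max_left _ _)) (convex_closedBall _ _) htm hsm

theorem model_bound (h u : ℝ) : |h ^ 3 / (h ^ 2 + u ^ 2) ^ 2| * |u| ≤ 1 := by
  rw [abs_div, abs_of_nonneg (by positivity : 0 ≤ (h ^ 2 + u ^ 2) ^ 2), div_mul_eq_mul_div]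
  apply div_le_one_of_le₀ _ (by positivity)
  rw [abs_pow, ← sq_abs h, ← sq_abs u]
  have := abs_nonneg h
  have := abs_nonneg u
  generalize |h| = a at *
  generalize |u| = b at *
  have h1 : a * b ≤ a ^ 2 + b ^ 2 := by nlinarith [sq_nonneg (a - b)]
  calc a ^ 3 * b = a ^ 2 * (a * b) := by ring
    _ ≤ (a ^ 2 + b ^ 2) * (a ^ 2 + b ^ 2) := by gcongr; nlinarith [sq_nonneg b]
    _ = _ := by ring

theorem limit_kk (L : ℝ) (hL : 0 < L) (γ : ℝ → ℝ × ℝ) (hγ : ContDiff ℝ (⊤ : ℕ∞) γ)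
    (h₀ M m t : ℝ) (hh₀ : 0 < h₀) (hm : 0 < m)
    (hb : ∀ h, |h| ≤ h₀ → ∀ s, |s - t| ≤ L / 2 →
      m * (h ^ 2 + (s - t) ^ 2) ≤
        dot2 (γ t + h • nor γ t - γ s) (γ t + h • nor γ t - γ s) ∧
      |kk γ (γ t + h • nor γ t) s - h ^ 3 / (h ^ 2 + (s - t) ^ 2) ^ 2| ≤ M)
    (σ : ℝ → ℝ) (hσ : ContDiff ℝ (⊤ : ℕ∞) σ)
    (l : Filter ℝ) [l.IsCountablyGenerated] (hl : l ≤ 𝓝[≠] 0) (e : ℝ)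
    (he : Tendsto (fun h => arctan (L / 2 * h⁻¹)) l (𝓝 e)) :
    Tendsto (fun h => ∫ s in (t - L / 2)..(t + L / 2), kk γ (γ t + h • nor γ t) s * σ s) l
      (𝓝 (e * σ t + ∫ s in (t - L / 2)..(t + L / 2), kk γ (γ t) s * σ s)) := by
  obtain ⟨S, hS0, hS⟩ := exists_S L hL σ hσ t
  have hl0 : l ≤ 𝓝 0 := hl.trans nhdsWithin_le_nhds
  have hne : ∀ᶠ h in l, h ≠ 0 := hl self_mem_nhdsWithin
  have hsmall : ∀ᶠ h in l, |h| ≤ h₀ := by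
    apply hl0
    filter_upwards [Metric.ball_mem_nhds (0 : ℝ) hh₀] with h hh
    simpa using (Metric.mem_ball.1 hh).le
  have hmem : ∀ s, s ∈ Set.uIoc (t - L / 2) (t + L / 2) → |s - t| ≤ L / 2 := by
    intro s hs
    rw [Set.uIoc_of_le (by linarith)] at hs
    rw [abs_le]
    constructor <;> linarith [hs.1, hs.2]
  have hdc : Continuous (deriv γ) := hγ.continuous_deriv (by simp)
  have hγc := hγ.continuous
  have hmeas : ∀ h, Measurable (fun s => kk γ (γ t + h • nor γ t) s * σ s
      - h ^ 3 / (h ^ 2 + (s - t) ^ 2) ^ 2 * σ t) := by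
    intro h
    have m1 : Measurable (fun s => dot2 (γ t + h • nor γ t - γ s) (nor γ s)) := by
      apply Continuous.measurable
      unfold dot2 nor
      fun_prop
    have m2 : Measurable (fun s => dot2 (γ t + h • nor γ t - γ s) (γ t + h • nor γ t - γ s)) := by
      apply Continuous.measurable
      unfold dot2
      fun_prop
    have m3 : Measurable (fun s => h ^ 3 / (h ^ 2 + (s - t) ^ 2) ^ 2) :=
      measurable_const.div (Continuous.measurable (by fun_prop))
    exact (((m1.pow_const 3).div (m2.pow_const 2)).mul hσ.continuous.measurable).sub
      (m3.mul_const _)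
  have hbd : ∀ h, |h| ≤ h₀ → ∀ s, |s - t| ≤ L / 2 → ‖kk γ (γ t + h • nor γ t) s * σ s
      - h ^ 3 / (h ^ 2 + (s - t) ^ 2) ^ 2 * σ t‖ ≤ M * S + S := by
    intro h hh s hs
    obtain ⟨-, b1⟩ := hb h hh s hs
    obtain ⟨s1, s2⟩ := hS s hs
    have b2 := model_bound h (s - t)
    generalize kk γ (γ t + h • nor γ t) s = k at *
    generalize h ^ 3 / (h ^ 2 + (s - t) ^ 2) ^ 2 = v at *
    have hM : 0 ≤ M := (abs_nonneg _).trans b1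
    rw [Real.norm_eq_abs]
    calc |k * σ s - v * σ t| = |(k - v) * σ s + v * (σ s - σ t)| := by ring_nf
      _ ≤ |k - v| * |σ s| + |v| * |σ s - σ t| := by
        rw [← abs_mul, ← abs_mul]; exact abs_add_le _ _
      _ ≤ M * S + |v| * (S * |s - t|) := by gcongr
      _ = M * S + S * (|v| * |s - t|) := by ring
      _ ≤ M * S + S * 1 := by gcongr
      _ = _ := by ring
  have hlim1 : Tendsto (fun h => ∫ s in (t - L / 2)..(t + L / 2),
      (kk γ (γ t + h • nor γ t) s * σ s - h ^ 3 / (h ^ 2 + (s - t) ^ 2) ^ 2 * σ t)) l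
      (𝓝 (∫ s in (t - L / 2)..(t + L / 2), kk γ (γ t) s * σ s)) := by
    apply intervalIntegral.tendsto_integral_filter_of_dominated_convergence (fun _ => M * S + S)
    · exact Eventually.of_forall fun h => (hmeas h).aestronglyMeasurable
    · filter_upwards [hsmall] with h hh
      exact Eventually.of_forall fun s hs => hbd h hh s (hmem s hs)
    · exact intervalIntegrable_const
    · have : ∀ᵐ s : ℝ, s ≠ t := by
        simp [ae_iff, measure_singleton]
      filter_upwards [this] with s hst hs
      apply Tendsto.mono_left _ hl0
      have hu : s - t ≠ 0 := sub_ne_zero.2 hst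
      have hρ := (hb 0 (by simpa using hh₀.le) s (hmem s hs)).1
      have hρ0 : dot2 (γ t + (0 : ℝ) • nor γ t - γ s) (γ t + (0 : ℝ) • nor γ t - γ s) ≠ 0 := by
        apply ne_of_gt
        refine lt_of_lt_of_le ?_ hρ
        positivity
      have hc : ContinuousAt (fun h : ℝ => kk γ (γ t + h • nor γ t) s * σ s
          - h ^ 3 / (h ^ 2 + (s - t) ^ 2) ^ 2 * σ t) 0 := by
        apply ContinuousAt.sub
        · apply ContinuousAt.mul _ continuousAt_const
          unfold kk
          refine ContinuousAt.div ?_ ?_ (show dot2 (γ t + (0 : ℝ) • nor γ t - γ s)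
            (γ t + (0 : ℝ) • nor γ t - γ s) ^ 2 ≠ 0 from pow_ne_zero _ hρ0)
          · unfold dot2; fun_prop
          · unfold dot2; fun_prop
        · apply ContinuousAt.mul _ continuousAt_const
          apply ContinuousAt.div (by fun_prop) (by fun_prop)
          simpa using hu
      simpa [ContinuousAt] using hc
  have hlim2 : Tendsto (fun h => (h * (L / 2) / (h ^ 2 + (L / 2) ^ 2) + arctan (L / 2 * h⁻¹)) * σ t) l
      (𝓝 (e * σ t)) := by
    have hc : ContinuousAt (fun h : ℝ => h * (L / 2) / (h ^ 2 + (L / 2) ^ 2)) 0 := by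
      apply ContinuousAt.div (by fun_prop) (by fun_prop)
      positivity
    have hc' : Tendsto (fun h : ℝ => h * (L / 2) / (h ^ 2 + (L / 2) ^ 2)) l (𝓝 0) := by
      have := hc.tendsto.mono_left hl0
      simpa using this
    simpa using (hc'.add he).mul_const (σ t)
  refine (hlim2.add hlim1).congr' ?_
  filter_upwards [hne, hsmall] with h hh hs
  have i1 : IntervalIntegrable (fun s => kk γ (γ t + h • nor γ t) s * σ s
      - h ^ 3 / (h ^ 2 + (s - t) ^ 2) ^ 2 * σ t) volume (t - L / 2) (t + L / 2) := by
    refine (intervalIntegrable_const (c := M * S + S)).mono_fun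
      (hmeas h).aestronglyMeasurable ?_
    filter_upwards [ae_restrict_mem measurableSet_uIoc] with s hs'
    exact (hbd h hs s (hmem s hs')).trans (le_abs_self _)
  have i2 : IntervalIntegrable (fun s => h ^ 3 / (h ^ 2 + (s - t) ^ 2) ^ 2 * σ t) volume
      (t - L / 2) (t + L / 2) := by
    apply Continuous.intervalIntegrable
    apply Continuous.mul _ continuous_const
    apply Continuous.div (by fun_prop) (by fun_prop)
    intro s
    positivity
  rw [← model_integral (L / 2) t h hh, ← intervalIntegral.integral_mul_const,
    ← intervalIntegral.integral_add i2 i1]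
  congr 1
  ext s
  ring

theorem stmt14 (L : ℝ) (hL : 0 < L) (γ : ℝ → ℝ × ℝ)
    (hγ : ContDiff ℝ (⊤ : ℕ∞) γ)
    (hper : ∀ s, γ (s + L) = γ s)
    (hinj : Set.InjOn γ (Set.Ico 0 L))
    (harc : ∀ s, dot2 (deriv γ s) (deriv γ s) = 1)
    (σ : ℝ → ℝ) (hσ : ContDiff ℝ (⊤ : ℕ∞) σ) (hσper : ∀ s, σ (s + L) = σ s)
    (t : ℝ) :
    ∃ h₀ > (0 : ℝ),
      (∀ h : ℝ, 0 < |h| → |h| < h₀ → ∀ s : ℝ, γ t + h • nor γ t ≠ γ s) ∧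
      (∃ M : ℝ, ∀ s ∈ Set.Icc (0 : ℝ) L, |K1clamped γ (γ t) s * σ s| ≤ M) ∧
      Tendsto
        (fun h : ℝ => ∫ s in (0 : ℝ)..L, K1clamped γ (γ t + h • nor γ t) s * σ s)
        (𝓝[>] (0 : ℝ))
        (𝓝 (-(1 / 2) * σ t + ∫ s in (0 : ℝ)..L, K1clamped γ (γ t) s * σ s)) ∧
      Tendsto
        (fun h : ℝ => ∫ s in (0 : ℝ)..L, K1clamped γ (γ t + h • nor γ t) s * σ s)
        (𝓝[<] (0 : ℝ))
        (𝓝 (1 / 2 * σ t + ∫ s in (0 : ℝ)..L, K1clamped γ (γ t) s * σ s)) := by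
  obtain ⟨h₀, M, m, hh₀, hm, hb⟩ := bounds L hL γ hγ hper hinj harc t
  obtain ⟨S, hS0, hS⟩ := exists_S L hL σ hσ t
  have hπ := Real.pi_pos
  have hγp : Function.Periodic γ L := hper
  have hσp : Function.Periodic σ L := hσper
  have hdp : Function.Periodic (deriv γ) L := by
    intro s
    have : (fun x => γ (x + L)) = γ := funext hper
    rw [← deriv_comp_add_const, this]
  have hKp : ∀ x, Function.Periodic (fun s => K1clamped γ x s * σ s) L := by
    intro x s
    simp only [K1clamped, nor, tang, hper s, hσper s, hdp s]
  have hred : ∀ s : ℝ, ∃ k : ℤ, |s - k • L - t| ≤ L / 2 := by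
    intro s
    refine ⟨toIcoDiv hL (t - L / 2) s, ?_⟩
    have := toIcoMod_mem_Ico hL (t - L / 2) s
    rw [toIcoMod] at this
    rw [abs_le]
    constructor <;> linarith [this.1, this.2]
  have hint : ∀ x, ∫ s in (0 : ℝ)..L, K1clamped γ x s * σ s
      = -(1 / π) * ∫ s in (t - L / 2)..(t + L / 2), kk γ x s * σ s := by
    intro x
    have h1 := (hKp x).intervalIntegral_add_eq 0 (t - L / 2)
    rw [zero_add, show t - L / 2 + L = t + L / 2 by ring] at h1
    rw [h1, ← intervalIntegral.integral_const_mul]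
    congr 1
    ext s
    rw [K1_eq γ harc, kk]
    ring
  have hright : Tendsto (fun h : ℝ => arctan (L / 2 * h⁻¹)) (𝓝[>] 0) (𝓝 (π / 2)) :=
    (tendsto_arctan_atTop.mono_right nhdsWithin_le_nhds).comp
      (tendsto_inv_nhdsGT_zero.const_mul_atTop (by positivity))
  have hleft : Tendsto (fun h : ℝ => arctan (L / 2 * h⁻¹)) (𝓝[<] 0) (𝓝 (-(π / 2))) :=
    (tendsto_arctan_atBot.mono_right nhdsWithin_le_nhds).comp
      (tendsto_inv_nhdsLT_zero.const_mul_atBot (by positivity))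
  refine ⟨h₀, hh₀, ?_, ?_, ?_, ?_⟩
  · intro h hpos hlt s heq
    obtain ⟨k, hk⟩ := hred s
    rw [← hγp.sub_zsmul_eq (x := s) k] at heq
    have := (hb h hlt.le _ hk).1
    rw [heq, sub_self] at this
    have h2 : 0 < h ^ 2 := by
      have := abs_pos.1 hpos
      positivity
    have h3 : 0 < m * (h ^ 2 + (s - k • L - t) ^ 2) := by positivity
    simp only [dot2, Prod.fst_zero, Prod.snd_zero] at this
    linarith
  · refine ⟨1 / π * (M * S), fun s _ => ?_⟩
    obtain ⟨k, hk⟩ := hred s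
    have e := (hKp (γ t)).sub_zsmul_eq (x := s) k
    rw [← e]
    have b1 := (hb 0 (by simpa using hh₀.le) _ hk).2
    have b2 := (hS _ hk).1
    rw [zero_smul, add_zero, zero_pow (by norm_num), zero_div, sub_zero] at b1
    rw [K1_eq γ harc, ← kk, abs_mul, abs_mul, abs_neg, abs_of_pos (by positivity : 0 < 1 / π), mul_assoc]
    have := (abs_nonneg _).trans b1
    gcongr
  · simp only [hint]
    have := (limit_kk L hL γ hγ h₀ M m t hh₀ hm hb σ hσ (𝓝[>] 0)
      (nhdsWithin_mono _ fun x hx => ne_of_gt hx) _ hright).const_mul (-(1 / π))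
    convert this using 2
    field_simp
    ring
  · simp only [hint]
    have := (limit_kk L hL γ hγ h₀ M m t hh₀ hm hb σ hσ (𝓝[<] 0)
      (nhdsWithin_mono _ fun x hx => ne_of_lt hx) _ hleft).const_mul (-(1 / π))
    convert this using 2
    field_simp
    ring
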